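/- Let H be a finite-dimensional complex Hilbert space, Ŷ a self-adjoint operator on H with nondegenerate spectrum, 𝒴 the algebra of operators that are functions of Ŷ, and ρ̂ a density matrix with ⟨φ_y, ρ̂ φ_y⟩ ≠ 0 for all y ∈ σ(Ŷ). Then there exists a unique map ℰ : 𝓛(H) → 𝒴 such that (1) ℰ(f(Ŷ)X̂) = f(Ŷ)ℰ(X̂) for every X̂ ∈ 𝓛(H) and every f : σ(Ŷ) → ℂ, and (2) Tr(ρ̂ ℰ(X̂)) = Tr(ρ̂ X̂) for every X̂ ∈ 𝓛(H); moreover this map is ℰ(X̂) = 𝔼^ℓ_ρ̂(X̂|Ŷ) := Σ_{y∈σ(Ŷ)} (⟨φ_y, X̂ρ̂ φ_y⟩/⟨φ_y, ρ̂ φ_y⟩) Π_y. -/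

import Mathlib

open scoped ComplexOrder
noncomputable section

variable {H : Type*} [NormedAddCommGroup H] [InnerProductSpace ℂ H] [FiniteDimensional ℂ H]

/-- The rank-one orthogonal projector onto the line spanned by a unit vector `v`. -/
def proj (v : H) : H →ₗ[ℂ] H where
  toFun w := (inner ℂ v w : ℂ) • v
  map_add' x y := by simp [inner_add_right, add_smul]
  map_smul' c x := by simp [inner_smul_right, smul_smul]

/-- The operator `f(Ŷ) = Σ_y f(y) Π_y` associated to a function `f` on the spectrum,
for an operator with orthonormal eigenbasis `φ`. -/
def opF {ι : Type*} [Fintype ι] (φ : ι → H) (f : ι → ℂ) : H →ₗ[ℂ] H :=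
  ∑ i, f i • proj (φ i)


/-- The left quantum conditional expectation
`𝔼^ℓ_ρ̂(X̂|Ŷ) = Σ_y (⟨φ_y, X̂ρ̂ φ_y⟩/⟨φ_y, ρ̂ φ_y⟩) Π_y`. -/
def EcondL {ι : Type*} [Fintype ι] (φ : ι → H) (ρ X : H →ₗ[ℂ] H) : H →ₗ[ℂ] H :=
  ∑ i, ((inner ℂ (φ i) ((X ∘ₗ ρ) (φ i)) : ℂ) / (inner ℂ (φ i) (ρ (φ i)) : ℂ)) • proj (φ i)

/-- The characterizing properties of the left quantum conditional expectation: the map takes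
values in the algebra `𝒴` of functions of `Ŷ`, pulls functions of `Ŷ` out on the left, and
has the iterated expectation property with respect to `ρ̂`. -/
def IsLeftCondExpMap {ι : Type*} [Fintype ι] (φ : ι → H) (ρ : H →ₗ[ℂ] H)
    (E : (H →ₗ[ℂ] H) → (H →ₗ[ℂ] H)) : Prop :=
  (∀ X : H →ₗ[ℂ] H, ∃ f : ι → ℂ, E X = opF φ f) ∧
  (∀ (f : ι → ℂ) (X : H →ₗ[ℂ] H), E (opF φ f ∘ₗ X) = opF φ f ∘ₗ E X) ∧
  (∀ X : H →ₗ[ℂ] H, LinearMap.trace ℂ H (ρ ∘ₗ E X) = LinearMap.trace ℂ H (ρ ∘ₗ X))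

/-! Testing `Tr(ρ̂ ℰ(·)) = Tr(ρ̂ ·)` on `Π_y X̂` and pulling `Π_y` out of `ℰ` gives
`Tr(ρ̂ Π_y ℰ(X̂)) = Tr(ρ̂ Π_y X̂)`. When `ℰ(X̂) = f(Ŷ)` this reads
`f(y) ⟨φ_y, ρ̂ φ_y⟩ = ⟨φ_y, X̂ρ̂ φ_y⟩`, which determines `f(y)`. Conversely, with these values
`Tr(ρ̂ f(Ŷ)) = Σ_y f(y) ⟨φ_y, ρ̂ φ_y⟩` is the trace of `X̂ρ̂` computed in the basis `φ`. -/

section Projectors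

variable {ι : Type*} [Fintype ι] {φ : ι → H}

omit [FiniteDimensional ℂ H]

lemma opF_single [DecidableEq ι] (φ : ι → H) (i : ι) : opF φ (Pi.single i 1) = proj (φ i) := by
  simp [opF, Pi.single_apply, ite_smul]

lemma opF_apply (φ : ι → H) (f : ι → ℂ) (v : H) :
    opF φ f v = ∑ i, f i • (inner ℂ (φ i) v : ℂ) • φ i := by
  simp [opF, proj]

lemma inner_opF_apply (hφ : Orthonormal ℂ φ) (f : ι → ℂ) (i : ι) (v : H) :
    inner ℂ (φ i) (opF φ f v) = f i * inner ℂ (φ i) v := by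
  simp only [opF_apply, smul_smul, hφ.inner_right_fintype]

lemma opF_comp_opF (hφ : Orthonormal ℂ φ) (f g : ι → ℂ) :
    opF φ f ∘ₗ opF φ g = opF φ (f * g) := by
  ext v
  simp only [LinearMap.comp_apply, opF_apply φ f, inner_opF_apply hφ, opF_apply φ (f * g),
    Pi.mul_apply, smul_smul, mul_assoc]

end Projectors

lemma trace_comp_proj (T : H →ₗ[ℂ] H) (v : H) :
    LinearMap.trace ℂ H (T ∘ₗ proj v) = inner ℂ v (T v) := by
  have h : T ∘ₗ proj v = (InnerProductSpace.rankOne ℂ (T v) v : H →L[ℂ] H) := by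
    ext w
    simp [proj]
  rw [h, InnerProductSpace.trace_rankOne]

lemma trace_comp_proj_comp (S T : H →ₗ[ℂ] H) (v : H) :
    LinearMap.trace ℂ H (S ∘ₗ proj v ∘ₗ T) = inner ℂ v (T (S v)) := by
  rw [← LinearMap.trace_comp_cycle, ← LinearMap.comp_assoc, trace_comp_proj, LinearMap.comp_apply]

lemma trace_comp_opF {ι : Type*} [Fintype ι] (T : H →ₗ[ℂ] H) (φ : ι → H) (f : ι → ℂ) :
    LinearMap.trace ℂ H (T ∘ₗ opF φ f) = ∑ i, f i * inner ℂ (φ i) (T (φ i)) := by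
  rw [opF, ← Module.End.mul_eq_comp, Finset.mul_sum, map_sum]
  simp only [mul_smul_comm, Module.End.mul_eq_comp, map_smul, trace_comp_proj, smul_eq_mul]

section LeftConditionalExpectation

variable {ι : Type*} [Fintype ι] {φ : ι → H} {ρ : H →ₗ[ℂ] H}
  {E : (H →ₗ[ℂ] H) → (H →ₗ[ℂ] H)}

section PullOut

omit [FiniteDimensional ℂ H]

/-- The left conditional expectation `𝔼^ℓ_ρ̂(X̂|Ŷ = y) = ⟨φ_y, X̂ρ̂ φ_y⟩/⟨φ_y, ρ̂ φ_y⟩` of `X̂`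
given the outcome `y` of `Ŷ`, as a function of the index of `φ_y`; it is the symbol of the
operator `𝔼^ℓ_ρ̂(X̂|Ŷ)`. Its value is `0` where `⟨φ_y, ρ̂ φ_y⟩ = 0`. -/
def leftCondExpVal (φ : ι → H) (ρ X : H →ₗ[ℂ] H) (i : ι) : ℂ :=
  inner ℂ (φ i) (X (ρ (φ i))) / inner ℂ (φ i) (ρ (φ i))

lemma EcondL_eq_opF (φ : ι → H) (ρ X : H →ₗ[ℂ] H) :
    EcondL φ ρ X = opF φ (leftCondExpVal φ ρ X) :=
  rfl

lemma leftCondExpVal_opF_comp (hφ : Orthonormal ℂ φ) (ρ : H →ₗ[ℂ] H) (f : ι → ℂ)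
    (X : H →ₗ[ℂ] H) :
    leftCondExpVal φ ρ (opF φ f ∘ₗ X) = f * leftCondExpVal φ ρ X := by
  funext i
  simp only [leftCondExpVal, LinearMap.comp_apply, inner_opF_apply hφ, mul_div_assoc, Pi.mul_apply]

lemma EcondL_opF_comp (hφ : Orthonormal ℂ φ) (ρ : H →ₗ[ℂ] H) (f : ι → ℂ) (X : H →ₗ[ℂ] H) :
    EcondL φ ρ (opF φ f ∘ₗ X) = opF φ f ∘ₗ EcondL φ ρ X := by
  rw [EcondL_eq_opF, EcondL_eq_opF, leftCondExpVal_opF_comp hφ, opF_comp_opF hφ]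

lemma IsLeftCondExpMap.trace_comp_proj_comp_apply (hE : IsLeftCondExpMap φ ρ E) (i : ι)
    (X : H →ₗ[ℂ] H) :
    LinearMap.trace ℂ H (ρ ∘ₗ proj (φ i) ∘ₗ E X) =
      LinearMap.trace ℂ H (ρ ∘ₗ proj (φ i) ∘ₗ X) := by
  classical
  obtain ⟨-, hpull, htrace⟩ := hE
  rw [← opF_single, ← hpull, htrace]

end PullOut

lemma trace_comp_EcondL (φ : OrthonormalBasis ι ℂ H) (hρ : ∀ i, inner ℂ (φ i) (ρ (φ i)) ≠ 0)
    (X : H →ₗ[ℂ] H) :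
    LinearMap.trace ℂ H (ρ ∘ₗ EcondL φ ρ X) = LinearMap.trace ℂ H (ρ ∘ₗ X) :=
  calc LinearMap.trace ℂ H (ρ ∘ₗ EcondL φ ρ X)
      = ∑ i, leftCondExpVal φ ρ X i * inner ℂ (φ i) (ρ (φ i)) := by
        rw [EcondL_eq_opF, trace_comp_opF]
    _ = ∑ i, inner ℂ (φ i) ((X ∘ₗ ρ) (φ i)) :=
        Finset.sum_congr rfl fun i _ => div_mul_cancel₀ _ (hρ i)
    _ = LinearMap.trace ℂ H (X ∘ₗ ρ) := (LinearMap.trace_eq_sum_inner _ φ).symm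
    _ = LinearMap.trace ℂ H (ρ ∘ₗ X) := LinearMap.trace_comp_comm' _ _

lemma isLeftCondExpMap_EcondL (φ : OrthonormalBasis ι ℂ H)
    (hρ : ∀ i, inner ℂ (φ i) (ρ (φ i)) ≠ 0) : IsLeftCondExpMap φ ρ (EcondL φ ρ) :=
  ⟨fun X => ⟨_, EcondL_eq_opF φ ρ X⟩, EcondL_opF_comp φ.orthonormal ρ, trace_comp_EcondL φ hρ⟩

lemma IsLeftCondExpMap.eq_EcondL (hE : IsLeftCondExpMap φ ρ E) (hφ : Orthonormal ℂ φ)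
    (hρ : ∀ i, inner ℂ (φ i) (ρ (φ i)) ≠ 0) : E = EcondL φ ρ := by
  funext X
  obtain ⟨f, hf⟩ := hE.1 X
  suffices f = leftCondExpVal φ ρ X by rw [hf, this, EcondL_eq_opF]
  funext i
  refine eq_div_of_mul_eq (hρ i) ?_
  calc f i * inner ℂ (φ i) (ρ (φ i))
      = LinearMap.trace ℂ H (ρ ∘ₗ proj (φ i) ∘ₗ E X) := by
        rw [hf, trace_comp_proj_comp, inner_opF_apply hφ]
    _ = LinearMap.trace ℂ H (ρ ∘ₗ proj (φ i) ∘ₗ X) := hE.trace_comp_proj_comp_apply i X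
    _ = inner ℂ (φ i) (X (ρ (φ i))) := trace_comp_proj_comp _ _ _

end LeftConditionalExpectation

theorem stmt6_general {ι : Type*} [Fintype ι] (φ : OrthonormalBasis ι ℂ H) {ρ : H →ₗ[ℂ] H}
    (hρ : ∀ i, inner ℂ (φ i) (ρ (φ i)) ≠ 0) (E : (H →ₗ[ℂ] H) → (H →ₗ[ℂ] H)) :
    IsLeftCondExpMap φ ρ E ↔ E = EcondL φ ρ :=
  ⟨fun hE => hE.eq_EcondL φ.orthonormal hρ, fun hE => hE ▸ isLeftCondExpMap_EcondL φ hρ⟩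

/-- there is a unique map `ℰ : 𝓛(H) → 𝒴` with `ℰ(f(Ŷ)X̂) = f(Ŷ)ℰ(X̂)` and
`Tr(ρ̂ ℰ(X̂)) = Tr(ρ̂ X̂)`; it is `X̂ ↦ 𝔼^ℓ_ρ̂(X̂|Ŷ)`. -/
theorem stmt6 {ι : Type*} [Fintype ι] (φ : OrthonormalBasis ι ℂ H)
    (Y : H →ₗ[ℂ] H) (y : ι → ℝ) (hy : Function.Injective y)
    (hY : ∀ i, Y (φ i) = (y i : ℂ) • φ i)
    (ρ : H →ₗ[ℂ] H) (hpos : ∀ v, 0 ≤ (inner ℂ v (ρ v) : ℂ))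
    (htr : LinearMap.trace ℂ H ρ = 1)
    (hρ : ∀ i, (inner ℂ (φ i) (ρ (φ i)) : ℂ) ≠ 0) :
    (∃! E : (H →ₗ[ℂ] H) → (H →ₗ[ℂ] H), IsLeftCondExpMap (fun i => φ i) ρ E) ∧
    (∀ E : (H →ₗ[ℂ] H) → (H →ₗ[ℂ] H), IsLeftCondExpMap (fun i => φ i) ρ E →
      E = fun X => EcondL (fun i => φ i) ρ X) := by
  have key := stmt6_general φ hρ
  exact ⟨⟨_, (key _).2 rfl, fun E => (key E).1⟩, fun E => (key E).1⟩
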